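/- Let G and H be finite-dimensional Lie algebras over a field k, let φ : G → H be a Lie algebra homomorphism with dual map φ* : H* → G*, and let O_G : G* → G be a skewsymmetric O-operator (with respect to the coadjoint action of G on G*). Then O_H := φ ∘ O_G ∘ φ* : H* → H is a skewsymmetric O-operator with respect to the coadjoint action of H on H*: it is skewsymmetric, and O_H(O_H(ū)·v̄ − O_H(v̄)·ū) = [O_H(ū), O_H(v̄)] for all ū, v̄ ∈ H*. -/

import Mathlib

/-- The coadjoint action of `X ∈ G` on `u ∈ G*`: `⟨X·u, Y⟩ = −⟨u, [X, Y]⟩`. -/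
noncomputable def coad {k : Type*} [Field k] {L : Type*} [LieRing L] [LieAlgebra k L]
    (X : L) (u : Module.Dual k L) : Module.Dual k L :=
  - (u ∘ₗ (LieAlgebra.ad k L X))

/-!
Both conditions transport along a linear map intertwining the actions. The dual map of a Lie
homomorphism `φ` is such a map: `φ*(φ(x)·v) = x·φ*(v)`. Hence with `u = φ*(ū)` and `v = φ*(v̄)` the
`O`-operator identity for `φ ∘ O ∘ φ*` at `(ū, v̄)` is the image under `φ` of the identity for `O`
at `(u, v)`.
-/

open Module (Dual)

section SkewSymmetric

variable {R M N : Type*} [CommSemiring R] [AddCommMonoid M] [Module R M]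
  [AddCommMonoid N] [Module R N]

/-- Skew-symmetry of a linear map `T : M* → M` with respect to the canonical pairing. In
characteristic two this does not force `⟨u, T u⟩ = 0`. -/
def IsSkewOperator (T : Dual R M →ₗ[R] M) : Prop :=
  ∀ u v : Dual R M, u (T v) + v (T u) = 0

theorem IsSkewOperator.comp_dualMap {T : Dual R M →ₗ[R] M} (hT : IsSkewOperator T)
    (f : M →ₗ[R] N) : IsSkewOperator (f ∘ₗ T ∘ₗ f.dualMap) :=
  fun u v ↦ hT (f.dualMap u) (f.dualMap v)

end SkewSymmetric

section OOperator

variable {R L L' M M' : Type*} [CommRing R] [LieRing L] [LieAlgebra R L] [LieRing L']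
  [LieAlgebra R L'] [AddCommGroup M] [Module R M] [LieRingModule L M] [AddCommGroup M']
  [Module R M'] [LieRingModule L' M']

/-- `O`-operators (relative Rota–Baxter operators of weight zero) `T : M → L` on a Lie module `M`
over `L`. The coadjoint case is `M = Dual R L`, with Mathlib's action of `L` on the dual of the
adjoint module. -/
def IsOOperator (T : M →ₗ[R] L) : Prop :=
  ∀ u v : M, T (⁅T u, v⁆ - ⁅T v, u⁆) = ⁅T u, T v⁆

theorem IsOOperator.comp_of_map_lie {T : M →ₗ[R] L} (hT : IsOOperator T) (φ : L →ₗ⁅R⁆ L')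
    (ψ : M' →ₗ[R] M) (hψ : ∀ (x : L) (m : M'), ψ ⁅φ x, m⁆ = ⁅x, ψ m⁆) :
    IsOOperator (φ.toLinearMap ∘ₗ T ∘ₗ ψ) := fun u v ↦
  calc
    φ (T (ψ (⁅φ (T (ψ u)), v⁆ - ⁅φ (T (ψ v)), u⁆)))
      = φ (T (⁅T (ψ u), ψ v⁆ - ⁅T (ψ v), ψ u⁆)) := by rw [map_sub, hψ, hψ]
    _ = φ ⁅T (ψ u), T (ψ v)⁆ := by rw [hT]
    _ = ⁅φ (T (ψ u)), φ (T (ψ v))⁆ := φ.map_lie _ _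

end OOperator

theorem dualMap_lie {R G H : Type*} [CommRing R] [LieRing G] [LieAlgebra R G] [LieRing H]
    [LieAlgebra R H] (φ : G →ₗ⁅R⁆ H) (x : G) (v : Dual R H) :
    φ.toLinearMap.dualMap ⁅φ x, v⁆ = ⁅x, φ.toLinearMap.dualMap v⁆ := by
  ext y
  change -v ⁅φ x, φ y⁆ = -v (φ ⁅x, y⁆)
  rw [φ.map_lie]

theorem coad_eq_lie {k L : Type*} [Field k] [LieRing L] [LieAlgebra k L] (x : L)
    (u : Dual k L) : coad x u = ⁅x, u⁆ :=
  rfl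

theorem O_operator_pushforward_general {R G H : Type*} [CommRing R] [LieRing G] [LieAlgebra R G]
    [LieRing H] [LieAlgebra R H] (φ : G →ₗ⁅R⁆ H) {T : Dual R G →ₗ[R] G}
    (hskew : IsSkewOperator T) (hT : IsOOperator T) :
    IsSkewOperator (φ.toLinearMap ∘ₗ T ∘ₗ φ.toLinearMap.dualMap) ∧
      IsOOperator (φ.toLinearMap ∘ₗ T ∘ₗ φ.toLinearMap.dualMap) :=
  ⟨hskew.comp_dualMap φ.toLinearMap, hT.comp_of_map_lie φ _ (dualMap_lie φ)⟩

/-- **Proposition 4.9.** If `φ : G → H` is a Lie algebra homomorphism and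
`O_G : G* → G` a skewsymmetric `O`-operator, then `O_H = φ ∘ O_G ∘ φ* : H* → H` is a
skewsymmetric `O`-operator. -/
theorem O_operator_pushforward (k : Type*) [Field k]
    (G : Type*) [LieRing G] [LieAlgebra k G] [FiniteDimensional k G]
    (H : Type*) [LieRing H] [LieAlgebra k H] [FiniteDimensional k H]
    (φ : G →ₗ⁅k⁆ H)
    (OG : Module.Dual k G →ₗ[k] G)
    (hskew : ∀ u v : Module.Dual k G, u (OG v) + v (OG u) = 0)
    (hO : ∀ u v : Module.Dual k G,
      OG (coad (OG u) v - coad (OG v) u) = ⁅OG u, OG v⁆) :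
    let OH : Module.Dual k H →ₗ[k] H := φ.toLinearMap ∘ₗ OG ∘ₗ φ.toLinearMap.dualMap
    (∀ u v : Module.Dual k H, u (OH v) + v (OH u) = 0) ∧
      (∀ u v : Module.Dual k H,
        OH (coad (OH u) v - coad (OH v) u) = ⁅OH u, OH v⁆) := by
  simp only [coad_eq_lie] at hO ⊢
  exact O_operator_pushforward_general φ hskew hO
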